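/- arXiv:1505.01520 — 3 statements merged into one kernel-verified Lean document; each statement's English description precedes it below -/
import Mathlib

section
/- If f″ ∈ L_1[a,b], then |τ(x;α,β)| ≤ (‖f″‖_1/(2(α+β)))·max{ (α/(x−a))·(x−a−h(b−a)/2)², (α/(x−a))·(h(b−a)/2)², (β/(b−x))·(b−h(b−a)/2−x)², (β/(b−x))·(h(b−a)/2)² }, where ‖f″‖_1 = ∫_a^b |f″(t)| dt. -/
open MeasureTheory intervalIntegral

/-- Integral mean of `f` over `[c,d]`. -/
noncomputable def intMean (f : ℝ → ℝ) (c d : ℝ) : ℝ :=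
  (1 / (d - c)) * ∫ t in c..d, f t

/-- The functional τ(x; α, β) of the paper (with parameter h). -/
noncomputable def tau (a b h α β : ℝ) (f f' : ℝ → ℝ) (x : ℝ) : ℝ :=
  (1 / (2 * (α + β))) * ((α / (x - a)) * (x - a - h * (b - a) / 2) ^ 2
      - (β / (b - x)) * (x - b + h * (b - a) / 2) ^ 2) * f' x
  - (1 / (α + β)) * ((α / (x - a)) * (x - a - h * (b - a) / 2)
      - (β / (b - x)) * (x - b + h * (b - a) / 2)) * f x
  - (h * (b - a) / (2 * (α + β))) * ((α / (x - a)) * f a + (β / (b - x)) * f b)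
  + (h ^ 2 * (b - a) ^ 2 / (8 * (α + β))) * ((β / (b - x)) * f' b - (α / (x - a)) * f' a)
  + (1 / (α + β)) * (α * intMean f a x + β * intMean f x b)

theorem aux_parts (p q c : ℝ) (f f' f'' : ℝ → ℝ) (hpq : p ≤ q)
    (hfd : ∀ t ∈ Set.Icc p q, HasDerivAt f (f' t) t)
    (hint : IntervalIntegrable f'' volume p q)
    (hac : ∀ t ∈ Set.Icc p q, f' t = f' p + ∫ u in p..t, f'' u) :
    ∫ t in p..q, (t - c) ^ 2 / 2 * f'' t =
      (q - c) ^ 2 / 2 * f' q - (p - c) ^ 2 / 2 * f' p - (q - c) * f q + (p - c) * f p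
        + ∫ t in p..q, f t := by
  have hu : ∀ t : ℝ, HasDerivAt (fun t : ℝ => (t - c) ^ 2 / 2) (t - c) t := by
    intro t
    have := (((hasDerivAt_id t).sub_const c).pow 2).div_const 2
    refine (this.congr_deriv ?_)
    simp
  have hF : AbsolutelyContinuousOnInterval (fun t => ∫ v in p..t, f'' v) p q :=
    hint.absolutelyContinuousOnInterval_intervalIntegral (by simp)
  have hU : AbsolutelyContinuousOnInterval (fun t : ℝ => (t - c) ^ 2 / 2) p q := by
    apply ContDiffOn.absolutelyContinuousOnInterval
    exact ContDiff.contDiffOn (by fun_prop)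
  have h1 := hU.integral_mul_deriv_eq_deriv_mul hF
  have e1 : ∫ t in p..q, (t - c) ^ 2 / 2 * f'' t
      = ∫ t in p..q, (t - c) ^ 2 / 2 * deriv (fun t => ∫ v in p..t, f'' v) t := by
    apply intervalIntegral.integral_congr_ae
    filter_upwards [hint.ae_hasDerivAt_integral] with t ht htm
    rw [(ht (Set.uIoc_subset_uIcc htm) p (by simp)).deriv]
  have e2 : ∫ t in p..q, deriv (fun t : ℝ => (t - c) ^ 2 / 2) t * (∫ v in p..t, f'' v)
      = ∫ t in p..q, (t - c) * (∫ v in p..t, f'' v) := by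
    congr 1; ext t; rw [(hu t).deriv]
  have hfc : ContinuousOn f (Set.uIcc p q) := by
    rw [Set.uIcc_of_le hpq]
    exact fun t ht => (hfd t ht).continuousAt.continuousWithinAt
  have h2 := intervalIntegral.integral_mul_deriv_eq_deriv_mul (a := p) (b := q)
    (u := fun t => t - c) (u' := fun _ => 1) (v := fun t => f t - f' p * t)
    (v' := fun t => ∫ v in p..t, f'' v)
    (fun t _ => (hasDerivAt_id t).sub_const c)
    (fun t ht => by
      rw [Set.uIcc_of_le hpq] at ht
      have := (hfd t ht).sub ((hasDerivAt_id t).const_mul (f' p))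
      refine this.congr_deriv ?_
      rw [hac t ht]; ring)
    (by simp) hF.continuousOn.intervalIntegrable
  have e3 : ∫ t in p..q, (1:ℝ) * (f t - f' p * t)
      = (∫ t in p..q, f t) - f' p * ((q ^ 2 - p ^ 2) / 2) := by
    simp only [one_mul]
    rw [intervalIntegral.integral_sub hfc.intervalIntegrable
      (Continuous.intervalIntegrable (by fun_prop) _ _),
      intervalIntegral.integral_const_mul, integral_id]
  have hq := hac q ⟨hpq, le_rfl⟩
  rw [e1, h1, e2, h2, e3]
  simp only [intervalIntegral.integral_same]
  rw [hq]; ring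

theorem aux_bound (p q c M : ℝ) (f'' : ℝ → ℝ) (hpq : p ≤ q)
    (hint : IntervalIntegrable f'' volume p q)
    (h1 : (p - c) ^ 2 ≤ M) (h2 : (q - c) ^ 2 ≤ M) :
    |∫ t in p..q, (t - c) ^ 2 / 2 * f'' t| ≤ M / 2 * ∫ t in p..q, |f'' t| := by
  have hi : IntervalIntegrable (fun t => (t - c) ^ 2 / 2 * f'' t) volume p q :=
    hint.continuousOn_mul (by fun_prop)
  refine (intervalIntegral.abs_integral_le_integral_abs hpq).trans ?_
  rw [← intervalIntegral.integral_const_mul]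
  refine intervalIntegral.integral_mono_on hpq hi.abs (hint.abs.const_mul _) ?_
  intro t ht
  rw [abs_mul, abs_of_nonneg (by positivity : (0:ℝ) ≤ (t - c) ^ 2 / 2)]
  apply mul_le_mul_of_nonneg_right _ (abs_nonneg _)
  have : (t - c) ^ 2 ≤ M := by
    rcases le_total t c with h | h
    · nlinarith [ht.1, ht.2]
    · nlinarith [ht.1, ht.2]
  linarith

theorem stmt_3 (a b h α β x : ℝ) (f f' f'' : ℝ → ℝ)
    (hab : a < b)
    (hh : h ∈ Set.Icc (0 : ℝ) 1)
    (hα : 0 ≤ α) (hβ : 0 ≤ β) (hαβ : 0 < α + β)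
    (hax : a < x) (hxb : x < b)
    (hx1 : a + h * (b - a) / 2 ≤ x) (hx2 : x ≤ b - h * (b - a) / 2)
    (hfd : ∀ t ∈ Set.Icc a b, HasDerivAt f (f' t) t)
    (hf''int : IntervalIntegrable f'' MeasureTheory.volume a b)
    (hac : ∀ t ∈ Set.Icc a b, f' t = f' a + ∫ u in a..t, f'' u)
    :
    |tau a b h α β f f' x| ≤
      ((∫ t in a..b, |f'' t|) / (2 * (α + β))) *
      max (max ((α / (x - a)) * (x - a - h * (b - a) / 2) ^ 2)
            ((α / (x - a)) * (h * (b - a) / 2) ^ 2))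
          (max ((β / (b - x)) * (b - h * (b - a) / 2 - x) ^ 2)
            ((β / (b - x)) * (h * (b - a) / 2) ^ 2)) := by
  have hxm : x ∈ Set.uIcc a b := by rw [Set.uIcc_of_le hab.le]; exact ⟨hax.le, hxb.le⟩
  have i1 : IntervalIntegrable f'' volume a x :=
    hf''int.mono_set (Set.uIcc_subset_uIcc_left hxm)
  have i2 : IntervalIntegrable f'' volume x b :=
    hf''int.mono_set (Set.uIcc_subset_uIcc_right hxm)
  set H := h * (b - a) / 2 with hH
  have p1 := aux_parts a x (a + H) f f' f'' hax.le
    (fun t ht => hfd t ⟨ht.1, ht.2.trans hxb.le⟩) i1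
    (fun t ht => hac t ⟨ht.1, ht.2.trans hxb.le⟩)
  have p2 := aux_parts x b (b - H) f f' f'' hxb.le
    (fun t ht => hfd t ⟨hax.le.trans ht.1, ht.2⟩) i2
    (fun t ht => by
      rw [hac t ⟨hax.le.trans ht.1, ht.2⟩, hac x ⟨hax.le, hxb.le⟩, add_assoc,
        intervalIntegral.integral_add_adjacent_intervals i1
          (i2.mono_set (Set.uIcc_subset_uIcc_left (by rw [Set.uIcc_of_le hxb.le]; exact ht)))])
  have b1 := aux_bound a x (a + H) (max ((x - a - H) ^ 2) (H ^ 2)) f'' hax.le i1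
    (le_max_of_le_right (le_of_eq (by ring))) (le_max_of_le_left (le_of_eq (by ring)))
  have b2 := aux_bound x b (b - H) (max ((b - H - x) ^ 2) (H ^ 2)) f'' hxb.le i2
    (le_max_of_le_left (le_of_eq (by ring))) (le_max_of_le_right (le_of_eq (by ring)))
  have hN := intervalIntegral.integral_add_adjacent_intervals i1.abs i2.abs
  have hN1 : 0 ≤ ∫ t in a..x, |f'' t| :=
    intervalIntegral.integral_nonneg hax.le (fun _ _ => abs_nonneg _)
  have hN2 : 0 ≤ ∫ t in x..b, |f'' t| :=
    intervalIntegral.integral_nonneg hxb.le (fun _ _ => abs_nonneg _)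
  have hA : 0 ≤ α / (x - a) := div_nonneg hα (by linarith)
  have hB : 0 ≤ β / (b - x) := div_nonneg hβ (by linarith)
  have ht : tau a b h α β f f' x = (1 / (α + β)) *
      (α / (x - a) * (∫ t in a..x, (t - (a + H)) ^ 2 / 2 * f'' t)
        + β / (b - x) * ∫ t in x..b, (t - (b - H)) ^ 2 / 2 * f'' t) := by
    rw [p1, p2]
    unfold tau intMean
    have : x - a ≠ 0 := by linarith
    have : b - x ≠ 0 := by linarith
    have := hαβ.ne'
    rw [hH]
    field_simp
    ring
  rw [ht, ← mul_max_of_nonneg _ _ hA, ← mul_max_of_nonneg _ _ hB, ← hN, abs_mul,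
    abs_of_pos (by positivity : 0 < 1 / (α + β))]
  generalize (∫ t in a..x, (t - (a + H)) ^ 2 / 2 * f'' t) = I1 at *
  generalize (∫ t in x..b, (t - (b - H)) ^ 2 / 2 * f'' t) = I2 at *
  generalize (∫ t in a..x, |f'' t|) = N1 at *
  generalize (∫ t in x..b, |f'' t|) = N2 at *
  generalize max ((x - a - H) ^ 2) (H ^ 2) = M1 at *
  generalize max ((b - H - x) ^ 2) (H ^ 2) = M2 at *
  generalize α / (x - a) = A at *
  generalize β / (b - x) = B at *
  have key : |A * I1 + B * I2| ≤ (N1 + N2) / 2 * max (A * M1) (B * M2) := by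
    calc |A * I1 + B * I2| ≤ |A * I1| + |B * I2| := abs_add_le _ _
      _ = A * |I1| + B * |I2| := by rw [abs_mul, abs_mul, abs_of_nonneg hA, abs_of_nonneg hB]
      _ ≤ A * (M1 / 2 * N1) + B * (M2 / 2 * N2) := by gcongr
      _ = (A * M1) * N1 / 2 + (B * M2) * N2 / 2 := by ring
      _ ≤ max (A * M1) (B * M2) * N1 / 2 + max (A * M1) (B * M2) * N2 / 2 := by
        gcongr
        · exact le_max_left _ _
        · exact le_max_right _ _
      _ = _ := by ring
  calc 1 / (α + β) * |A * I1 + B * I2|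
      ≤ 1 / (α + β) * ((N1 + N2) / 2 * max (A * M1) (B * M2)) := by gcongr
    _ = _ := by field_simp
end

section
/- Suppose f″ ∈ L_2[a,b]. Then |τ(x;α,β) − κ·m(x)| ≤ (b−a)·N(x)·[ (1/(b−a))·‖f″‖_2² − κ² ]^{1/2}, where ‖f″‖_2² = ∫_a^b f″(t)² dt, κ = (f′(b) − f′(a))/(b−a), m(x) = ∫_a^b P(x,t) dt = (1/(6(α+β)))·[ (α/(x−a))·{(x−a−h(b−a)/2)³ + (h(b−a)/2)³} + (β/(b−x))·{(b−h(b−a)/2−x)³ + (h(b−a)/2)³} ], and N(x)² = (1/(b−a))·(1/(20(α+β)²))·[ (α²/(x−a)²)·{(x−a−h(b−a)/2)⁵ + (h(b−a)/2)⁵} + (β²/(b−x)²)·{(b−h(b−a)/2−x)⁵ + (h(b−a)/2)⁵} ] − (m(x)/(b−a))². -/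
open MeasureTheory intervalIntegral

/-- The quantity m(x) = ∫_a^b P(x,t) dt. -/
noncomputable def pertM (a b h α β x : ℝ) : ℝ :=
  (1 / (6 * (α + β))) *
    ((α / (x - a)) * ((x - a - h * (b - a) / 2) ^ 3 + (h * (b - a) / 2) ^ 3)
      + (β / (b - x)) * ((b - h * (b - a) / 2 - x) ^ 3 + (h * (b - a) / 2) ^ 3))

/-- The quantity N(x)² of the perturbed results. -/
noncomputable def pertNsq (a b h α β x : ℝ) : ℝ :=
  (1 / (b - a)) * (1 / (20 * (α + β) ^ 2)) *
    ((α ^ 2 / (x - a) ^ 2) * ((x - a - h * (b - a) / 2) ^ 5 + (h * (b - a) / 2) ^ 5)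
      + (β ^ 2 / (b - x) ^ 2) * ((b - h * (b - a) / 2 - x) ^ 5 + (h * (b - a) / 2) ^ 5))
  - (pertM a b h α β x / (b - a)) ^ 2

lemma parts_aux (c d e : ℝ) (hcd : c ≤ d) (f F g : ℝ → ℝ)
    (hg : IntervalIntegrable g volume c d)
    (hF : ∀ t ∈ Set.Icc c d, F t = F c + ∫ u in c..t, g u)
    (hf : ∀ t ∈ Set.Icc c d, HasDerivAt f (F t) t) :
    ∫ t in c..d, (t - e) ^ 2 * g t = (d - e) ^ 2 * F d - (c - e) ^ 2 * F c
      - 2 * ((d - e) * f d - (c - e) * f c) + 2 * ∫ t in c..d, f t := by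
  have hu : Set.uIcc c d = Set.Icc c d := Set.uIcc_of_le hcd
  have hG := hg.absolutelyContinuousOnInterval_intervalIntegral (c := c) (by simp)
  have hP : AbsolutelyContinuousOnInterval (fun t : ℝ => (t - e) ^ 2) c d := by
    apply ContDiffOn.absolutelyContinuousOnInterval
    fun_prop
  have h1 := hP.integral_mul_deriv_eq_deriv_mul hG
  have h2 : ∫ t in c..d, (t - e) ^ 2 * g t
      = ∫ t in c..d, (t - e) ^ 2 * deriv (fun x => ∫ v in c..x, g v) t := by
    apply intervalIntegral.integral_congr_ae
    filter_upwards [hg.ae_hasDerivAt_integral] with t ht ht2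
    rw [(ht (Set.uIoc_subset_uIcc ht2) c (by simp)).deriv]
  have hd : ∀ t : ℝ, HasDerivAt (fun t : ℝ => (t - e) ^ 2) (2 * (t - e)) t := by
    intro t
    have := ((hasDerivAt_id t).sub_const e).fun_pow 2
    simpa using this
  have hFc : ContinuousOn F (Set.uIcc c d) := by
    have : ContinuousOn (fun t => F c + ∫ u in c..t, g u) (Set.uIcc c d) :=
      continuousOn_const.add hG.continuousOn
    exact this.congr (fun t ht => hF t (hu ▸ ht))
  have hfc : ContinuousOn f (Set.uIcc c d) := fun t ht =>
    (hf t (hu ▸ ht)).continuousAt.continuousWithinAt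
  have h3 : ∫ t in c..d, deriv (fun t : ℝ => (t - e) ^ 2) t * (∫ v in c..t, g v)
      = ∫ t in c..d, (2 * (t - e)) * (F t - F c) := by
    apply intervalIntegral.integral_congr
    intro t ht
    simp only [(hd t).deriv]
    rw [hF t (hu ▸ ht)]; ring
  have h4 := intervalIntegral.integral_mul_deriv_eq_deriv_mul (a := c) (b := d)
    (u := fun t => 2 * (t - e)) (u' := fun _ => 2) (v := fun t => f t - F c * t)
    (v' := fun t => F t - F c)
    (fun t _ => by simpa using ((hasDerivAt_id t).sub_const e).const_mul 2)
    (fun t ht => by simpa using (hf t (hu ▸ ht)).fun_sub ((hasDerivAt_id t).const_mul (F c)))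
    (by simp) ((hFc.sub continuousOn_const).intervalIntegrable)
  have h5 : ∫ t in c..d, (2 : ℝ) * (f t - F c * t)
      = 2 * (∫ t in c..d, f t) - F c * (d ^ 2 - c ^ 2) := by
    rw [intervalIntegral.integral_const_mul, intervalIntegral.integral_sub
      hfc.intervalIntegrable (by apply Continuous.intervalIntegrable; fun_prop),
      intervalIntegral.integral_const_mul, integral_id]
    ring
  have h6 := hF d ⟨hcd, le_rfl⟩
  rw [h2, h1, h3, h4, h5]
  simp only [intervalIntegral.integral_same]
  have : (∫ u in c..d, g u) = F d - F c := by linarith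
  rw [this]; ring

lemma int_pow_aux (c d e : ℝ) (n : ℕ) :
    ∫ t in c..d, (t - e) ^ n = ((d - e) ^ (n + 1) - (c - e) ^ (n + 1)) / (n + 1) := by
  rw [intervalIntegral.integral_comp_sub_right (fun t => t ^ n) e, integral_pow]

lemma quad_aux (c d e w s r : ℝ) (hcd : c ≤ d) (g : ℝ → ℝ)
    (hg : IntervalIntegrable g volume c d)
    (hg2 : IntervalIntegrable (fun t => g t ^ 2) volume c d) :
    0 ≤ w ^ 2 * (((d - e) ^ 5 - (c - e) ^ 5) / 5) + 2 * s * w * (∫ t in c..d, (t - e) ^ 2 * g t)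
      + s ^ 2 * (∫ t in c..d, g t ^ 2) + 2 * r * w * (((d - e) ^ 3 - (c - e) ^ 3) / 3)
      + 2 * r * s * (∫ t in c..d, g t) + r ^ 2 * (d - c) := by
  have h0 : 0 ≤ ∫ t in c..d, (w * (t - e) ^ 2 + s * g t + r) ^ 2 :=
    intervalIntegral.integral_nonneg hcd (fun t _ => sq_nonneg _)
  have hpg : IntervalIntegrable (fun t => (t - e) ^ 2 * g t) volume c d :=
    hg.continuousOn_mul (by fun_prop)
  have i4 : IntervalIntegrable (fun t : ℝ => (t - e) ^ 4) volume c d := by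
    apply Continuous.intervalIntegrable; fun_prop
  have i2 : IntervalIntegrable (fun t : ℝ => (t - e) ^ 2) volume c d := by
    apply Continuous.intervalIntegrable; fun_prop
  have hE : (fun t => (w * (t - e) ^ 2 + s * g t + r) ^ 2) = fun t =>
      w ^ 2 * (t - e) ^ 4 + (2 * s * w) * ((t - e) ^ 2 * g t) + s ^ 2 * g t ^ 2
      + (2 * r * w) * (t - e) ^ 2 + (2 * r * s) * g t + r ^ 2 := by
    funext t; ring
  have j1 := i4.const_mul (w ^ 2)
  have j2 := j1.add (hpg.const_mul (2 * s * w))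
  have j3 := j2.add (hg2.const_mul (s ^ 2))
  have j4 := j3.add (i2.const_mul (2 * r * w))
  have j5 := j4.add (hg.const_mul (2 * r * s))
  rw [hE, intervalIntegral.integral_add j5 (by simp),
    intervalIntegral.integral_add j4 (hg.const_mul _),
    intervalIntegral.integral_add j3 (i2.const_mul _),
    intervalIntegral.integral_add j2 (hg2.const_mul _),
    intervalIntegral.integral_add j1 (hpg.const_mul _)] at h0
  simp only [intervalIntegral.integral_const_mul, int_pow_aux, intervalIntegral.integral_const,
    smul_eq_mul] at h0
  norm_num at h0
  linarith

lemma cs_aux (A B G m K L : ℝ) (hL : 0 < L)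
    (H : ∀ s r : ℝ, 0 ≤ A + 2 * s * B + s ^ 2 * G + 2 * r * m + 2 * r * s * K + r ^ 2 * L) :
    |B - K / L * m| ≤ L * Real.sqrt (1 / L * A - (m / L) ^ 2)
      * Real.sqrt (1 / L * G - (K / L) ^ 2) := by
  have hq : ∀ s : ℝ, 0 ≤ (1 / L * G - (K / L) ^ 2) * (s * s)
      + (2 * (B - K / L * m) / L) * s + (1 / L * A - (m / L) ^ 2) := by
    intro s
    have h := H s (-(m + s * K) / L)
    have h2 := div_nonneg h hL.le
    refine le_of_le_of_eq h2 ?_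
    field_simp
    ring
  have hA := hq 0
  have hd := discrim_le_zero hq
  rw [mul_assoc, ← Real.sqrt_mul (by simpa using hA)]
  have : |B - K / L * m| / L ≤ Real.sqrt ((1 / L * A - (m / L) ^ 2) * (1 / L * G - (K / L) ^ 2)) := by
    apply Real.le_sqrt_of_sq_le
    rw [div_pow, sq_abs]
    unfold discrim at hd
    have e : (2 * (B - K / L * m) / L) ^ 2 = 4 * ((B - K / L * m) ^ 2 / L ^ 2) := by
      rw [div_pow]; ring
    rw [e] at hd
    linarith
  rw [div_le_iff₀ hL] at this
  linarith

theorem stmt_15 (a b h α β x : ℝ) (f f' f'' : ℝ → ℝ)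
    (hab : a < b)
    (hh : h ∈ Set.Icc (0 : ℝ) 1)
    (hα : 0 ≤ α) (hβ : 0 ≤ β) (hαβ : 0 < α + β)
    (hax : a < x) (hxb : x < b)
    (hx1 : a + h * (b - a) / 2 ≤ x) (hx2 : x ≤ b - h * (b - a) / 2)
    (hfd : ∀ t ∈ Set.Icc a b, HasDerivAt f (f' t) t)
    (hf''int : IntervalIntegrable f'' MeasureTheory.volume a b)
    (hac : ∀ t ∈ Set.Icc a b, f' t = f' a + ∫ u in a..t, f'' u)
    (hL2 : IntervalIntegrable (fun t => (f'' t) ^ 2) MeasureTheory.volume a b) :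
    |tau a b h α β f f' x - ((f' b - f' a) / (b - a)) * pertM a b h α β x| ≤
      (b - a) * Real.sqrt (pertNsq a b h α β x) *
        Real.sqrt ((1 / (b - a)) * (∫ t in a..b, (f'' t) ^ 2)
          - ((f' b - f' a) / (b - a)) ^ 2) := by
  have hxa : 0 < x - a := by linarith
  have hbx : 0 < b - x := by linarith
  have hba : 0 < b - a := by linarith
  have sub1 : Set.uIcc a x ⊆ Set.uIcc a b := by
    rw [Set.uIcc_of_le hax.le, Set.uIcc_of_le hab.le]; exact Set.Icc_subset_Icc le_rfl hxb.le
  have sub2 : Set.uIcc x b ⊆ Set.uIcc a b := by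
    rw [Set.uIcc_of_le hxb.le, Set.uIcc_of_le hab.le]; exact Set.Icc_subset_Icc hax.le le_rfl
  have g1 := hf''int.mono_set sub1
  have g2 := hf''int.mono_set sub2
  have q1 := hL2.mono_set sub1
  have q2 := hL2.mono_set sub2
  have hacx : ∀ t ∈ Set.Icc x b, f' t = f' x + ∫ u in x..t, f'' u := by
    intro t ht
    have hta : t ∈ Set.Icc a b := ⟨hax.le.trans ht.1, ht.2⟩
    have g3 : IntervalIntegrable f'' volume x t := g2.mono_set (by
      rw [Set.uIcc_of_le hxb.le, Set.uIcc_of_le ht.1]; exact Set.Icc_subset_Icc le_rfl ht.2)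
    rw [hac t hta, hac x ⟨hax.le, hxb.le⟩, add_assoc,
      intervalIntegral.integral_add_adjacent_intervals g1 g3]
  have p1 := parts_aux a x (a + h * (b - a) / 2) hax.le f f' f'' g1
    (fun t ht => hac t ⟨ht.1, ht.2.trans hxb.le⟩) (fun t ht => hfd t ⟨ht.1, ht.2.trans hxb.le⟩)
  have p2 := parts_aux x b (b - h * (b - a) / 2) hxb.le f f' f'' g2
    hacx (fun t ht => hfd t ⟨hax.le.trans ht.1, ht.2⟩)
  have hK : (∫ t in a..x, f'' t) + (∫ t in x..b, f'' t) = f' b - f' a := by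
    have h1 := hac x ⟨hax.le, hxb.le⟩
    have h2 := hacx b ⟨hxb.le, le_rfl⟩
    linarith
  have hG := intervalIntegral.integral_add_adjacent_intervals q1 q2
  have htau : tau a b h α β f f' x
      = α / (2 * (α + β) * (x - a)) * (∫ t in a..x, (t - (a + h * (b - a) / 2)) ^ 2 * f'' t)
      + β / (2 * (α + β) * (b - x)) * (∫ t in x..b, (t - (b - h * (b - a) / 2)) ^ 2 * f'' t) := by
    rw [p1, p2]
    unfold tau intMean
    generalize (∫ t in a..x, f t) = I1
    generalize (∫ t in x..b, f t) = I2
    field_simp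
    ring
  have key := cs_aux
    ((1 / (20 * (α + β) ^ 2)) *
    ((α ^ 2 / (x - a) ^ 2) * ((x - a - h * (b - a) / 2) ^ 5 + (h * (b - a) / 2) ^ 5)
      + (β ^ 2 / (b - x) ^ 2) * ((b - h * (b - a) / 2 - x) ^ 5 + (h * (b - a) / 2) ^ 5)))
    (tau a b h α β f f' x) (∫ t in a..b, (f'' t) ^ 2) (pertM a b h α β x) (f' b - f' a) (b - a) hba
    (by
      intro s r
      have k1 := quad_aux a x (a + h * (b - a) / 2) (α / (2 * (α + β) * (x - a))) s r hax.le
        f'' g1 q1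
      have k2 := quad_aux x b (b - h * (b - a) / 2) (β / (2 * (α + β) * (b - x))) s r hxb.le
        f'' g2 q2
      have k := add_nonneg k1 k2
      rw [htau, ← hK, ← hG]
      refine le_of_le_of_eq k ?_
      unfold pertM
      generalize (∫ t in a..x, (t - (a + h * (b - a) / 2)) ^ 2 * f'' t) = I1
      generalize (∫ t in x..b, (t - (b - h * (b - a) / 2)) ^ 2 * f'' t) = I2
      generalize (∫ t in a..x, f'' t) = I3
      generalize (∫ t in x..b, f'' t) = I4
      generalize (∫ t in a..x, f'' t ^ 2) = I5
      generalize (∫ t in x..b, f'' t ^ 2) = I6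
      field_simp
      ring)
  unfold pertNsq
  rw [mul_assoc (1 / (b - a))]
  exact key
end

section
/- Suppose there exist real numbers γ ≤ Γ with γ ≤ f″(t) ≤ Γ for almost every t ∈ [a,b]. Then |τ(x;α,β) − κ·m(x)| ≤ (b−a)·N(x)·(Γ−γ)/2, where κ = (f′(b) − f′(a))/(b−a), m(x) = (1/(6(α+β)))·[ (α/(x−a))·{(x−a−h(b−a)/2)³ + (h(b−a)/2)³} + (β/(b−x))·{(b−h(b−a)/2−x)³ + (h(b−a)/2)³} ], and N(x)² = (1/(b−a))·(1/(20(α+β)²))·[ (α²/(x−a)²)·{(x−a−h(b−a)/2)⁵ + (h(b−a)/2)⁵} + (β²/(b−x)²)·{(b−h(b−a)/2−x)⁵ + (h(b−a)/2)⁵} ] − (m(x)/(b−a))². -/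
open MeasureTheory intervalIntegral

lemma aux_ibp (c d p : ℝ) (f f' f'' : ℝ → ℝ) (hcd : c ≤ d)
    (hfd : ∀ t ∈ Set.Icc c d, HasDerivAt f (f' t) t)
    (hint : IntervalIntegrable f'' volume c d)
    (hac : ∀ t ∈ Set.Icc c d, f' t = f' c + ∫ u in c..t, f'' u) :
    ∫ t in c..d, (t - p) ^ 2 * f'' t = (d - p) ^ 2 * f' d - (c - p) ^ 2 * f' c
      - 2 * ((d - p) * f d - (c - p) * f c - ∫ t in c..d, f t) := by
  have hu : Set.uIcc c d = Set.Icc c d := Set.uIcc_of_le hcd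
  have hG := hint.absolutelyContinuousOnInterval_intervalIntegral (c := c) (by simp)
  have hP : AbsolutelyContinuousOnInterval (fun t : ℝ => (t - p) ^ 2) c d := by
    apply ContDiffOn.absolutelyContinuousOnInterval
    fun_prop
  have hdP : ∀ t : ℝ, HasDerivAt (fun t : ℝ => (t - p) ^ 2) (2 * (t - p)) t := by
    intro t
    have := ((hasDerivAt_id t).sub_const p).pow 2
    convert! this using 1
    simp
  have h1 := hP.integral_mul_deriv_eq_deriv_mul hG
  have h2 : ∫ t in c..d, (t - p) ^ 2 * deriv (fun x => ∫ v in c..x, f'' v) t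
      = ∫ t in c..d, (t - p) ^ 2 * f'' t := by
    apply intervalIntegral.integral_congr_ae
    filter_upwards [hint.ae_hasDerivAt_integral] with t ht hm
    rw [(ht (Set.uIoc_subset_uIcc hm) c (by simp)).deriv]
  rw [h2] at h1
  have hcont : ContinuousOn f' (Set.uIcc c d) := by
    have : ContinuousOn (fun t => f' c + ∫ v in c..t, f'' v) (Set.uIcc c d) :=
      continuousOn_const.add hG.continuousOn
    refine this.congr ?_
    intro t ht
    exact hac t (hu ▸ ht)
  have hf'i : IntervalIntegrable f' volume c d := hcont.intervalIntegrable
  have h3 : ∫ t in c..d, deriv (fun t : ℝ => (t - p) ^ 2) t * (∫ v in c..t, f'' v)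
      = ∫ t in c..d, (2 * (t - p) * f' t - 2 * (t - p) * f' c) := by
    apply intervalIntegral.integral_congr
    intro t ht
    have := hac t (hu ▸ ht)
    simp only [(hdP t).deriv]
    rw [this]; ring
  have h4 : ∫ t in c..d, (2 * (t - p) * f' t - 2 * (t - p) * f' c)
      = (∫ t in c..d, 2 * (t - p) * f' t) - ∫ t in c..d, 2 * (t - p) * f' c := by
    apply intervalIntegral.integral_sub
    · exact hf'i.continuousOn_mul (by fun_prop)
    · exact Continuous.intervalIntegrable (by fun_prop) _ _
  have h5 : ∫ t in c..d, 2 * (t - p) * f' c = (d - p) ^ 2 * f' c - (c - p) ^ 2 * f' c := by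
    apply intervalIntegral.integral_eq_sub_of_hasDerivAt (f := fun t => (t - p) ^ 2 * f' c)
    · intro t _
      exact (hdP t).mul_const _
    · exact Continuous.intervalIntegrable (by fun_prop) _ _
  have h6 : ∫ t in c..d, 2 * (t - p) * f' t
      = 2 * (d - p) * f d - 2 * (c - p) * f c - ∫ t in c..d, 2 * f t := by
    apply intervalIntegral.integral_mul_deriv_eq_deriv_mul (u := fun t => 2 * (t - p))
      (u' := fun _ => 2)
    · intro t _
      simpa using ((hasDerivAt_id t).sub_const p).const_mul 2
    · intro t ht
      exact hfd t (hu ▸ ht)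
    · exact intervalIntegrable_const
    · exact hf'i
  rw [intervalIntegral.integral_const_mul] at h6
  rw [h3, h4, h5, h6] at h1
  have h7 := hac d ⟨hcd, le_rfl⟩
  rw [h1, h7]
  simp
  ring

lemma aux_int (c d p u μ : ℝ) :
    ∫ t in c..d, (u * (t - p) ^ 2 - μ) = u * ((d - p) ^ 3 - (c - p) ^ 3) / 3 - μ * (d - c) := by
  rw [intervalIntegral.integral_eq_sub_of_hasDerivAt
    (f := fun t => u * (t - p) ^ 3 / 3 - μ * t)]
  · ring
  · intro t _
    have h := (((((hasDerivAt_id t).sub_const p).pow 3).const_mul u).div_const 3).sub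
      ((hasDerivAt_id t).const_mul μ)
    convert! h using 1
    simp; ring
  · exact Continuous.intervalIntegrable (by fun_prop) _ _

lemma aux_int_sq (c d p u μ : ℝ) :
    ∫ t in c..d, (u * (t - p) ^ 2 - μ) ^ 2 = u ^ 2 * ((d - p) ^ 5 - (c - p) ^ 5) / 5
      - 2 * u * μ * ((d - p) ^ 3 - (c - p) ^ 3) / 3 + μ ^ 2 * (d - c) := by
  rw [intervalIntegral.integral_eq_sub_of_hasDerivAt
    (f := fun t => u ^ 2 * (t - p) ^ 5 / 5 - 2 * u * μ * (t - p) ^ 3 / 3 + μ ^ 2 * t)]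
  · ring
  · intro t _
    have h := ((((((hasDerivAt_id t).sub_const p).pow 5).const_mul (u ^ 2)).div_const 5).sub
      (((((hasDerivAt_id t).sub_const p).pow 3).const_mul (2 * u * μ)).div_const 3)).add
      ((hasDerivAt_id t).const_mul (μ ^ 2))
    convert! h using 1
    simp; ring
  · exact Continuous.intervalIntegrable (by fun_prop) _ _

/-- Bound on one piece. -/
lemma aux_bound_s16 (c d γ Γ p u μ : ℝ) (f'' : ℝ → ℝ) (hcd : c ≤ d)
    (hint : IntervalIntegrable f'' volume c d)
    (hbd : ∀ᵐ t ∂volume.restrict (Set.Icc c d), γ ≤ f'' t ∧ f'' t ≤ Γ) :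
    |(u * ∫ t in c..d, (t - p) ^ 2 * f'' t) - μ * (∫ t in c..d, f'' t)
      - (γ + Γ) / 2 * (∫ t in c..d, (u * (t - p) ^ 2 - μ))|
      ≤ (Γ - γ) / 2 * ∫ t in c..d, |u * (t - p) ^ 2 - μ| := by
  have e : (u * ∫ t in c..d, (t - p) ^ 2 * f'' t) - μ * (∫ t in c..d, f'' t)
      - (γ + Γ) / 2 * (∫ t in c..d, (u * (t - p) ^ 2 - μ))
      = ∫ t in c..d, (u * (t - p) ^ 2 - μ) * (f'' t - (γ + Γ) / 2) := by
    have i1 : IntervalIntegrable (fun t => (t - p) ^ 2 * f'' t) volume c d :=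
      hint.continuousOn_mul (by fun_prop)
    have i2 : IntervalIntegrable (fun t => u * (t - p) ^ 2 - μ) volume c d :=
      Continuous.intervalIntegrable (by fun_prop) _ _
    rw [← intervalIntegral.integral_const_mul, ← intervalIntegral.integral_const_mul,
      ← intervalIntegral.integral_const_mul, ← intervalIntegral.integral_sub (i1.const_mul u)
        (hint.const_mul μ), ← intervalIntegral.integral_sub
        ((i1.const_mul u).sub (hint.const_mul μ)) (i2.const_mul _)]
    apply intervalIntegral.integral_congr
    intro t _
    simp only
    ring
  rw [e, ← Real.norm_eq_abs, ← intervalIntegral.integral_const_mul]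
  apply intervalIntegral.norm_integral_le_of_norm_le hcd
  · rw [ae_restrict_iff' measurableSet_Icc] at hbd
    filter_upwards [hbd] with t ht hm
    have := ht ⟨hm.1.le, hm.2⟩
    rw [Real.norm_eq_abs, abs_mul, mul_comm]
    apply mul_le_mul_of_nonneg_right _ (abs_nonneg _)
    rw [abs_le]; constructor <;> linarith
  · exact Continuous.intervalIntegrable (by fun_prop) _ _

lemma aux_sq (c d p u μ k : ℝ) (hcd : c ≤ d) :
    0 ≤ (∫ t in c..d, (u * (t - p) ^ 2 - μ) ^ 2) - 2 * k * (∫ t in c..d, |u * (t - p) ^ 2 - μ|)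
      + k ^ 2 * (d - c) := by
  have h : 0 ≤ ∫ t in c..d, (|u * (t - p) ^ 2 - μ| - k) ^ 2 :=
    intervalIntegral.integral_nonneg hcd (fun t _ => sq_nonneg _)
  have e : ∫ t in c..d, (|u * (t - p) ^ 2 - μ| - k) ^ 2
      = ∫ t in c..d, ((u * (t - p) ^ 2 - μ) ^ 2 - 2 * k * |u * (t - p) ^ 2 - μ| + k ^ 2) := by
    apply intervalIntegral.integral_congr
    intro t _
    simp only
    rw [← sq_abs (u * (t - p) ^ 2 - μ)]
    ring
  rw [e, intervalIntegral.integral_add, intervalIntegral.integral_sub,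
    intervalIntegral.integral_const_mul, intervalIntegral.integral_const] at h
  · simp only [smul_eq_mul] at h
    linarith
  all_goals exact Continuous.intervalIntegrable (by fun_prop) _ _

theorem stmt_16 (a b h α β x γ Γ : ℝ) (f f' f'' : ℝ → ℝ)
    (hab : a < b)
    (hh : h ∈ Set.Icc (0 : ℝ) 1)
    (hα : 0 ≤ α) (hβ : 0 ≤ β) (hαβ : 0 < α + β)
    (hax : a < x) (hxb : x < b)
    (hx1 : a + h * (b - a) / 2 ≤ x) (hx2 : x ≤ b - h * (b - a) / 2)
    (hfd : ∀ t ∈ Set.Icc a b, HasDerivAt f (f' t) t)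
    (hf''int : IntervalIntegrable f'' MeasureTheory.volume a b)
    (hac : ∀ t ∈ Set.Icc a b, f' t = f' a + ∫ u in a..t, f'' u)
    (hγΓ : γ ≤ Γ)
    (hbd : ∀ᵐ t ∂MeasureTheory.volume.restrict (Set.Icc a b), γ ≤ f'' t ∧ f'' t ≤ Γ) :
    |tau a b h α β f f' x - ((f' b - f' a) / (b - a)) * pertM a b h α β x| ≤
      (b - a) * Real.sqrt (pertNsq a b h α β x) * (Γ - γ) / 2 := by
  have hL : 0 < b - a := by linarith
  have hxa : x - a ≠ 0 := by linarith
  have hbx : b - x ≠ 0 := by linarith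
  have hs : α + β ≠ 0 := hαβ.ne'
  have hL' : b - a ≠ 0 := hL.ne'
  have hi1 : IntervalIntegrable f'' volume a x :=
    hf''int.mono_set (by rw [Set.uIcc_of_le hax.le, Set.uIcc_of_le hab.le]; exact Set.Icc_subset_Icc le_rfl hxb.le)
  have hi2 : IntervalIntegrable f'' volume x b :=
    hf''int.mono_set (by rw [Set.uIcc_of_le hxb.le, Set.uIcc_of_le hab.le]; exact Set.Icc_subset_Icc hax.le le_rfl)
  have hfx := hac x ⟨hax.le, hxb.le⟩
  have hfb := hac b ⟨hab.le, le_rfl⟩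
  have hadd := intervalIntegral.integral_add_adjacent_intervals hi1 hi2
  have ib1 := aux_ibp a x (a + h * (b - a) / 2) f f' f'' hax.le
    (fun t ht => hfd t ⟨ht.1, ht.2.trans hxb.le⟩) hi1
    (fun t ht => hac t ⟨ht.1, ht.2.trans hxb.le⟩)
  have ib2 := aux_ibp x b (b - h * (b - a) / 2) f f' f'' hxb.le
    (fun t ht => hfd t ⟨hax.le.trans ht.1, ht.2⟩) hi2
    (fun t ht => by
      have h1 := hac t ⟨hax.le.trans ht.1, ht.2⟩
      have hi3 : IntervalIntegrable f'' volume x t := hi2.mono_set (by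
        rw [Set.uIcc_of_le hxb.le, Set.uIcc_of_le ht.1]; exact Set.Icc_subset_Icc le_rfl ht.2)
      have := intervalIntegral.integral_add_adjacent_intervals hi1 hi3
      linarith)
  have hb1 : ∀ᵐ t ∂volume.restrict (Set.Icc a x), γ ≤ f'' t ∧ f'' t ≤ Γ :=
    ae_restrict_of_ae_restrict_of_subset (Set.Icc_subset_Icc le_rfl hxb.le) hbd
  have hb2 : ∀ᵐ t ∂volume.restrict (Set.Icc x b), γ ≤ f'' t ∧ f'' t ≤ Γ :=
    ae_restrict_of_ae_restrict_of_subset (Set.Icc_subset_Icc hax.le le_rfl) hbd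
  obtain ⟨u, hu⟩ : ∃ u, u = α / (2 * (α + β) * (x - a)) := ⟨_, rfl⟩
  obtain ⟨v, hv⟩ : ∃ v, v = β / (2 * (α + β) * (b - x)) := ⟨_, rfl⟩
  obtain ⟨μ, hμ⟩ : ∃ μ, μ = pertM a b h α β x / (b - a) := ⟨_, rfl⟩
  have hα' : α / (x - a) = 2 * (α + β) * u := by rw [hu]; field_simp
  have hβ' : β / (b - x) = 2 * (α + β) * v := by rw [hv]; field_simp
  have B1 := aux_bound_s16 a x γ Γ (a + h * (b - a) / 2) u μ f'' hax.le hi1 hb1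
  have B2 := aux_bound_s16 x b γ Γ (b - h * (b - a) / 2) v μ f'' hxb.le hi2 hb2
  have I1 := aux_int a x (a + h * (b - a) / 2) u μ
  have I2 := aux_int x b (b - h * (b - a) / 2) v μ
  have J1 := aux_int_sq a x (a + h * (b - a) / 2) u μ
  have J2 := aux_int_sq x b (b - h * (b - a) / 2) v μ
  obtain ⟨A1, hA1⟩ : ∃ A, A = ∫ t in a..x, |u * (t - (a + h * (b - a) / 2)) ^ 2 - μ| := ⟨_, rfl⟩
  obtain ⟨A2, hA2⟩ : ∃ A, A = ∫ t in x..b, |v * (t - (b - h * (b - a) / 2)) ^ 2 - μ| := ⟨_, rfl⟩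
  have S1 := aux_sq a x (a + h * (b - a) / 2) u μ ((A1 + A2) / (b - a)) hax.le
  have S2 := aux_sq x b (b - h * (b - a) / 2) v μ ((A1 + A2) / (b - a)) hxb.le
  rw [← hA1] at B1 S1
  rw [← hA2] at B2 S2
  have hA1n : 0 ≤ A1 := by
    rw [hA1]; exact intervalIntegral.integral_nonneg hax.le (fun t _ => abs_nonneg _)
  have hA2n : 0 ≤ A2 := by
    rw [hA2]; exact intervalIntegral.integral_nonneg hxb.le (fun t _ => abs_nonneg _)
  have hM : pertM a b h α β x = u * ((x - a - h * (b - a) / 2) ^ 3 + (h * (b - a) / 2) ^ 3) / 3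
      + v * ((b - h * (b - a) / 2 - x) ^ 3 + (h * (b - a) / 2) ^ 3) / 3 := by
    unfold pertM
    rw [hα', hβ']; field_simp; ring
  have hML : pertM a b h α β x = μ * (b - a) := by rw [hμ]; field_simp
  have hN : pertNsq a b h α β x = (1 / (b - a)) *
      (u ^ 2 * ((x - a - h * (b - a) / 2) ^ 5 + (h * (b - a) / 2) ^ 5) / 5
      + v ^ 2 * ((b - h * (b - a) / 2 - x) ^ 5 + (h * (b - a) / 2) ^ 5) / 5) - μ ^ 2 := by
    unfold pertNsq
    rw [← hμ, ← div_pow, ← div_pow, hα', hβ']; field_simp; ring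
  have hT : tau a b h α β f f' x = u * (∫ t in a..x, (t - (a + h * (b - a) / 2)) ^ 2 * f'' t)
      + v * (∫ t in x..b, (t - (b - h * (b - a) / 2)) ^ 2 * f'' t) := by
    rw [ib1, ib2]
    unfold tau intMean
    have e1 : α * (1 / (x - a) * ∫ t in a..x, f t) = 2 * (α + β) * u * ∫ t in a..x, f t := by
      rw [← hα']; ring
    have e2 : β * (1 / (b - x) * ∫ t in x..b, f t) = 2 * (α + β) * v * ∫ t in x..b, f t := by
      rw [← hβ']; ring
    rw [e1, e2, hα', hβ']
    field_simp
    ring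
  have hI : (∫ t in a..x, (u * (t - (a + h * (b - a) / 2)) ^ 2 - μ))
      + (∫ t in x..b, (v * (t - (b - h * (b - a) / 2)) ^ 2 - μ)) = 0 := by
    rw [I1, I2]
    linear_combination hML - hM
  have hJ : (∫ t in a..x, (u * (t - (a + h * (b - a) / 2)) ^ 2 - μ) ^ 2)
      + (∫ t in x..b, (v * (t - (b - h * (b - a) / 2)) ^ 2 - μ) ^ 2)
      = (b - a) * pertNsq a b h α β x := by
    have hN' : (b - a) * pertNsq a b h α β x =
      (u ^ 2 * ((x - a - h * (b - a) / 2) ^ 5 + (h * (b - a) / 2) ^ 5) / 5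
      + v ^ 2 * ((b - h * (b - a) / 2 - x) ^ 5 + (h * (b - a) / 2) ^ 5) / 5) - μ ^ 2 * (b - a) := by
      rw [hN]; field_simp
    rw [J1, J2, hN']
    linear_combination (2 * μ) * (hM - hML)
  have hCS : (A1 + A2) ≤ (b - a) * Real.sqrt (pertNsq a b h α β x) := by
    have k1 : 0 ≤ (b - a) * pertNsq a b h α β x - (A1 + A2) ^ 2 / (b - a) := by
      have : (b - a) * pertNsq a b h α β x - (A1 + A2) ^ 2 / (b - a)
        = (b - a) * pertNsq a b h α β x - 2 * ((A1 + A2) / (b - a)) * (A1 + A2)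
          + ((A1 + A2) / (b - a)) ^ 2 * (b - a) := by field_simp; ring
      rw [this, ← hJ]
      linarith
    have k2 : ((A1 + A2) / (b - a)) ^ 2 ≤ pertNsq a b h α β x := by
      have : (b - a) * ((A1 + A2) / (b - a)) ^ 2 = (A1 + A2) ^ 2 / (b - a) := by field_simp
      refine le_of_mul_le_mul_left ?_ hL
      linarith
    have k3 := Real.le_sqrt_of_sq_le k2
    rw [div_le_iff₀ hL] at k3
    linarith
  have hfin : tau a b h α β f f' x - ((f' b - f' a) / (b - a)) * pertM a b h α β x
      = ((u * ∫ t in a..x, (t - (a + h * (b - a) / 2)) ^ 2 * f'' t) - μ * (∫ t in a..x, f'' t)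
      - (γ + Γ) / 2 * (∫ t in a..x, (u * (t - (a + h * (b - a) / 2)) ^ 2 - μ)))
      + ((v * ∫ t in x..b, (t - (b - h * (b - a) / 2)) ^ 2 * f'' t) - μ * (∫ t in x..b, f'' t)
      - (γ + Γ) / 2 * (∫ t in x..b, (v * (t - (b - h * (b - a) / 2)) ^ 2 - μ))) := by
    have e : ((f' b - f' a) / (b - a)) * pertM a b h α β x = μ * (f' b - f' a) := by
      rw [hμ]; ring
    rw [e, hT]
    linear_combination (γ + Γ) / 2 * hI - μ * hfb + μ * hadd
  rw [hfin]
  refine (abs_add_le _ _).trans ((add_le_add B1 B2).trans ?_)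
  have := mul_le_mul_of_nonneg_left hCS (show 0 ≤ (Γ - γ) / 2 by linarith)
  linarith
end
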